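/- Let v = (a₁μ₁, a₂μ₂) ∈ ℝ² with a₁μ₁ ≠ 0 and a₂μ₂ ≠ 0, let p = ½·δ_v + ½·δ_{−v}, and let γ(b₁, b₂) be the normalized alignment between the approximate-ReLU-kernel prediction function f and its availability-rescaled version g_b. For i ∈ {1, 2}, let ζᵢ := (∂⁹/∂bᵢ⁹) γ evaluated at b = (1, 1). Then |ζ₁| − |ζ₂| = (5670 / (a₁²μ₁² + a₂²μ₂²)⁹) · (a₁a₂μ₁μ₂)⁸ · (a₁²μ₁² − a₂²μ₂²); in particular the order-9 sensitivities are the first to differ, and they differ in magnitude whenever a₁²μ₁² ≠ a₂²μ₂². -/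

import Mathlib

open MeasureTheory RealInnerProductSpace
open scoped ENNReal

/-!
Let `θ` be the angle between `v` and `w`. Evaluating the integrals on `{v, -v}` gives the alignment
`(1 + tan⁸ (θ / 2)) ^ (-1 / 2)`. Along a line `w = v + (t - c) e`, Lagrange's identity gives
`tan² (θ / 2) = (t - c)² G / P(t)²`, where `G = ‖v‖²‖e‖² - ⟪e, v⟫²` is the Gram determinant and
`P = ‖v‖‖w‖ + ⟪w, v⟫`. So the alignment is `1 - (t - c)⁸ G⁴ / (2 P(t)⁸)` up to `O((t - c)¹⁶)`: its
ninth derivative at `c` is `-(9! / 2) G⁴ (P⁻⁸)'(c)`, where `P(c) = 2‖v‖²` and `P'(c) = 2⟪e, v⟫`.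
For `v = e₁ + e₂` both directions `e₁` and `e₂` have the same `G`, so only `⟪e, v⟫` tells them
apart.
-/

section IteratedDeriv

variable {𝕜 : Type*} [NontriviallyNormedField 𝕜]

theorem iteratedDeriv_sub_pow_mul {m : ℕ} {c : 𝕜} {K : 𝕜 → 𝕜} (n : ℕ)
    (hK : ContDiffAt 𝕜 m K c) :
    iteratedDeriv m (fun t => (t - c) ^ n * K t) c =
      m.descFactorial n * iteratedDeriv (m - n) K c := by
  have hpow (i : ℕ) :
      iteratedDeriv i (fun t => (t - c) ^ n) c = if i = n then (n.factorial : 𝕜) else 0 := by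
    have hshift := congrFun (iteratedDeriv_comp_sub_const i (fun t : 𝕜 => t ^ n) c) c
    rw [hshift, sub_self, iteratedDeriv_fun_pow_zero]
    split_ifs <;> simp
  rw [iteratedDeriv_fun_mul (by fun_prop) hK]
  simp only [hpow, mul_ite, ite_mul, mul_zero, zero_mul, Finset.sum_ite_eq', Finset.mem_range]
  split_ifs with hnm
  · rw [Nat.descFactorial_eq_factorial_mul_choose]
    push_cast
    ring
  · rw [Nat.descFactorial_of_lt (by omega)]
    simp

theorem iteratedDeriv_succ_comp_sub_pow_mul [CompleteSpace 𝕜] {n : ℕ} (hn : 2 ≤ n) {c : 𝕜}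
    {h U : 𝕜 → 𝕜} (hh : AnalyticAt 𝕜 h 0) (hU : ContDiffAt 𝕜 (n + 1) U c) :
    iteratedDeriv (n + 1) (fun t => h ((t - c) ^ n * U t)) c =
      (n + 1).factorial * (deriv h 0 * deriv U c) := by
  set u : 𝕜 → 𝕜 := fun t => (t - c) ^ n * U t
  have hU' := (hU.differentiableAt (by simp)).hasDerivAt
  have hu : u c = 0 := by simp [u, show n ≠ 0 by omega]
  have hu' : HasDerivAt u 0 c := by
    have hpow := ((hasDerivAt_id c).sub_const c).pow n
    refine (hpow.mul hU').congr_deriv ?_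
    simp [show n ≠ 0 by omega, show n - 1 ≠ 0 by omega]
  have hslope : AnalyticAt 𝕜 (dslope h 0) (u c) := by
    obtain ⟨p, hp⟩ := hh
    exact hu ▸ hp.has_fpower_series_dslope_fslope.analyticAt
  have hcd : ContDiffAt 𝕜 (n + 1) (fun t => U t * dslope h 0 (u t)) c :=
    hU.mul (hslope.contDiffAt.comp c (by fun_prop))
  have hexpand : (fun t => h (u t)) = fun t => h 0 + (t - c) ^ n * (U t * dslope h 0 (u t)) := by
    funext t
    have hdslope : u t * dslope h 0 (u t) = h (u t) - h 0 := by
      simpa using sub_smul_dslope h 0 (u t)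
    linear_combination (-1) * hdslope
  have hderiv : deriv (fun t => U t * dslope h 0 (u t)) c = deriv U c * deriv h 0 := by
    have hslope' : HasDerivAt (fun t => dslope h 0 (u t)) 0 c := by
      simpa only [mul_zero] using! hslope.differentiableAt.hasDerivAt.comp c hu'
    simpa [hu] using (hU'.fun_mul hslope').deriv
  rw [hexpand, iteratedDeriv_const_add n.succ_pos, iteratedDeriv_sub_pow_mul n (mod_cast hcd)]
  simp [iteratedDeriv_one, hderiv, mul_comm, Nat.factorial_succ,
    Nat.descFactorial_eq_factorial_mul_choose]

end IteratedDeriv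

section InvSqrt

theorem div_sqrt_sq_add_sq {a : ℝ} (ha : 0 < a) (b : ℝ) :
    a / √(a ^ 2 + b ^ 2) = (√(1 + (b / a) ^ 2))⁻¹ := by
  have hfactor : a ^ 2 + b ^ 2 = a ^ 2 * (1 + (b / a) ^ 2) := by field_simp
  rw [hfactor, Real.sqrt_mul (sq_nonneg a), Real.sqrt_sq ha.le, div_mul_cancel_left₀ ha.ne']

theorem analyticAt_inv_sqrt_one_add : AnalyticAt ℝ (fun x : ℝ => (√(1 + x))⁻¹) 0 :=
  (((contDiffAt_const.add contDiffAt_id).sqrt (by simp)).inv (by simp)).analyticAt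

theorem deriv_inv_sqrt_one_add : deriv (fun x : ℝ => (√(1 + x))⁻¹) 0 = -1 / 2 := by
  have hderiv := (((hasDerivAt_id' (0 : ℝ)).const_add 1).sqrt (by simp)).fun_inv (by simp)
  rw [hderiv.deriv]
  norm_num

end InvSqrt

section InnerProductLine

variable {E : Type*} [NormedAddCommGroup E] [InnerProductSpace ℝ E]

theorem norm_sq_mul_norm_sq_sub_inner_sq_add_smul (v e : E) (s : ℝ) :
    ‖v‖ ^ 2 * ‖v + s • e‖ ^ 2 - ⟪v + s • e, v⟫ ^ 2 =
      s ^ 2 * (‖v‖ ^ 2 * ‖e‖ ^ 2 - ⟪e, v⟫ ^ 2) := by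
  rw [norm_add_sq_real, inner_add_left, real_inner_smul_left, real_inner_smul_right,
    real_inner_self_eq_norm_sq, norm_smul, mul_pow, Real.norm_eq_abs, sq_abs, real_inner_comm]
  ring

theorem hasDerivAt_norm_mul_norm_add_inner_line {v : E} (hv : v ≠ 0) (e : E) (c : ℝ) :
    HasDerivAt (fun t : ℝ => ‖v‖ * ‖v + (t - c) • e‖ + ⟪v + (t - c) • e, v⟫) (2 * ⟪e, v⟫) c := by
  have hline : HasDerivAt (fun t : ℝ => v + (t - c) • e) e c := by
    simpa using (((hasDerivAt_id c).sub_const c).smul_const e).const_add v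
  have hnorm : HasDerivAt (fun t : ℝ => ‖v + (t - c) • e‖) (⟪e, v⟫ / ‖v‖) c := by
    have := hline.norm_sq.sqrt (by simpa using hv)
    simp only [Real.sqrt_sq (norm_nonneg _), sub_self, zero_smul, add_zero] at this
    rwa [mul_div_mul_left _ _ two_ne_zero, real_inner_comm] at this
  refine ((hnorm.const_mul ‖v‖).add (hline.inner ℝ (hasDerivAt_const c v))).congr_deriv ?_
  rw [mul_div_cancel₀ _ (norm_ne_zero_iff.2 hv), inner_zero_right, zero_add, two_mul]

theorem contDiffAt_norm_mul_norm_add_inner_line {v : E} (hv : v ≠ 0) (e : E) (c : ℝ)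
    {n : WithTop ℕ∞} :
    ContDiffAt ℝ n (fun t : ℝ => ‖v‖ * ‖v + (t - c) • e‖ + ⟪v + (t - c) • e, v⟫) c := by
  have hnorm : ContDiffAt ℝ n (fun t : ℝ => ‖v + (t - c) • e‖) c :=
    ContDiffAt.norm ℝ (by fun_prop) (by simpa using hv)
  have hinner : ContDiffAt ℝ n (fun t : ℝ => ⟪v + (t - c) • e, v⟫) c :=
    ContDiffAt.inner ℝ (by fun_prop) contDiffAt_const
  exact (contDiffAt_const.mul hnorm).add hinner

end InnerProductLine

section SymmetricPair

variable {α : Type*} [MeasurableSpace α] [Neg α]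

/-- The uniform probability measure on `{v, -v}`. -/
noncomputable def symmetricPair (v : α) : Measure α :=
  (1 / 2 : ℝ≥0∞) • Measure.dirac v + (1 / 2 : ℝ≥0∞) • Measure.dirac (-v)

theorem integral_symmetricPair [MeasurableSingletonClass α] {F : Type*} [NormedAddCommGroup F]
    [NormedSpace ℝ F] [CompleteSpace F] (v : α) (f : α → F) :
    ∫ x, f x ∂symmetricPair v = (2⁻¹ : ℝ) • (f v + f (-v)) := by
  have hint (y : α) : Integrable f ((1 / 2 : ℝ≥0∞) • Measure.dirac y) :=
    (integrable_dirac (by simp)).smul_measure (by simp)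
  rw [symmetricPair, integral_add_measure (hint v) (hint (-v))]
  simp [smul_add]

end SymmetricPair

section Alignment

variable {E : Type*} [NormedAddCommGroup E] [InnerProductSpace ℝ E]

/-- The even normalized eigenfunction `φ₁` of the approximate ReLU kernel under the uniform
measure on `{v, -v}`. -/
noncomputable def evenFeature (v x : E) : ℝ :=
  (‖x‖ / (2 * ‖v‖)) * (1 + ⟪‖x‖⁻¹ • x, ‖v‖⁻¹ • v⟫ ^ 2)

/-- The odd normalized eigenfunction `φ₂` of the approximate ReLU kernel under the uniform
measure on `{v, -v}`. -/
noncomputable def oddFeature (v x : E) : ℝ :=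
  ⟪x, v⟫ / ‖v‖ ^ 2

/-- The prediction function whose coefficients on the eigenfunctions attached to `v` are read off
at `w`: the paper's `f` is `prediction v v`, and its `g_b` is `prediction v w_b`. -/
noncomputable def prediction (v w x : E) : ℝ :=
  (1 / 2) * (evenFeature v x * evenFeature v w + oddFeature v x * oddFeature v w)

/-- The normalized alignment of `prediction v v` and `prediction v w`, i.e. their cosine
similarity in `L²(symmetricPair v)`; the paper's `γ(b)` is `alignment v w_b`. -/
noncomputable def alignment [MeasurableSpace E] (v w : E) : ℝ :=
  (∫ x, prediction v v x * prediction v w x ∂symmetricPair v) /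
    (√(∫ x, prediction v v x ^ 2 ∂symmetricPair v) *
      √(∫ x, prediction v w x ^ 2 ∂symmetricPair v))

theorem evenFeature_neg (v x : E) : evenFeature v (-x) = evenFeature v x := by
  simp [evenFeature]

theorem oddFeature_neg (v x : E) : oddFeature v (-x) = -oddFeature v x := by
  simp [oddFeature, neg_div]

theorem evenFeature_self {v : E} (hv : v ≠ 0) : evenFeature v v = 1 := by
  have hunit : ⟪‖v‖⁻¹ • v, ‖v‖⁻¹ • v⟫ = 1 := by
    rw [real_inner_self_eq_norm_sq, norm_smul, norm_inv, norm_norm,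
      inv_mul_cancel₀ (norm_ne_zero_iff.2 hv), one_pow]
  have := norm_ne_zero_iff.2 hv
  rw [evenFeature, hunit]
  field_simp
  norm_num

theorem oddFeature_self {v : E} (hv : v ≠ 0) : oddFeature v v = 1 := by
  rw [oddFeature, real_inner_self_eq_norm_sq, div_self (by simpa using hv)]

theorem prediction_self {v : E} (hv : v ≠ 0) (w : E) :
    prediction v w v = (evenFeature v w + oddFeature v w) / 2 := by
  rw [prediction, evenFeature_self hv, oddFeature_self hv]
  ring

theorem prediction_neg_self {v : E} (hv : v ≠ 0) (w : E) :
    prediction v w (-v) = (evenFeature v w - oddFeature v w) / 2 := by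
  rw [prediction, evenFeature_neg, oddFeature_neg, evenFeature_self hv, oddFeature_self hv]
  ring

theorem evenFeature_add_oddFeature {v w : E} (hv : v ≠ 0) (hw : w ≠ 0) :
    evenFeature v w + oddFeature v w = (‖v‖ * ‖w‖ + ⟪w, v⟫) ^ 2 / (2 * ‖w‖ * ‖v‖ ^ 3) := by
  have := norm_ne_zero_iff.2 hv
  have := norm_ne_zero_iff.2 hw
  rw [evenFeature, oddFeature, real_inner_smul_left, real_inner_smul_right]
  field_simp
  ring

theorem evenFeature_sub_oddFeature {v w : E} (hv : v ≠ 0) (hw : w ≠ 0) :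
    evenFeature v w - oddFeature v w = (‖v‖ * ‖w‖ - ⟪w, v⟫) ^ 2 / (2 * ‖w‖ * ‖v‖ ^ 3) := by
  simpa [evenFeature_neg, oddFeature_neg, ← sub_eq_add_neg] using
    evenFeature_add_oddFeature hv (neg_ne_zero.2 hw)

variable [MeasurableSpace E] [MeasurableSingletonClass E]

theorem alignment_eq_div_sqrt_features {v : E} (hv : v ≠ 0) (w : E) :
    alignment v w = (evenFeature v w + oddFeature v w) /
      √((evenFeature v w + oddFeature v w) ^ 2 + (evenFeature v w - oddFeature v w) ^ 2) := by
  simp only [alignment, integral_symmetricPair, smul_eq_mul, prediction_self hv,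
    prediction_neg_self hv, evenFeature_self hv, oddFeature_self hv]
  set S := evenFeature v w + oddFeature v w
  set D := evenFeature v w - oddFeature v w
  have hsqrt : √(2⁻¹ * (((1 + 1) / 2) ^ 2 + ((1 - 1) / 2) ^ 2)) *
      √(2⁻¹ * ((S / 2) ^ 2 + (D / 2) ^ 2)) = 4⁻¹ * √(S ^ 2 + D ^ 2) := by
    have hsq : 2⁻¹ * (((1 + 1) / 2) ^ 2 + ((1 - 1) / 2) ^ 2) *
        (2⁻¹ * ((S / 2) ^ 2 + (D / 2) ^ 2)) = 4⁻¹ ^ 2 * (S ^ 2 + D ^ 2) := by ring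
    rw [← Real.sqrt_mul (by norm_num), hsq, Real.sqrt_mul (by positivity),
      Real.sqrt_sq (by norm_num)]
  rw [hsqrt, show 2⁻¹ * ((1 + 1) / 2 * (S / 2) + (1 - 1) / 2 * (D / 2)) = 4⁻¹ * S by ring,
    mul_div_mul_left _ _ (by norm_num)]

-- With `θ` the angle between `v` and `w`, the quotient below is `tan² (θ / 2)`.
theorem alignment_eq_inv_sqrt_one_add {v w : E} (h : 0 < ‖v‖ * ‖w‖ + ⟪w, v⟫) :
    alignment v w = (√(1 +
      ((‖v‖ ^ 2 * ‖w‖ ^ 2 - ⟪w, v⟫ ^ 2) / (‖v‖ * ‖w‖ + ⟪w, v⟫) ^ 2) ^ 4))⁻¹ := by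
  have hv : v ≠ 0 := by rintro rfl; simp at h
  have hw : w ≠ 0 := by rintro rfl; simp at h
  have := norm_pos_iff.2 hv
  have := norm_pos_iff.2 hw
  have hratio : (‖v‖ * ‖w‖ - ⟪w, v⟫) ^ 2 / (2 * ‖w‖ * ‖v‖ ^ 3) /
      ((‖v‖ * ‖w‖ + ⟪w, v⟫) ^ 2 / (2 * ‖w‖ * ‖v‖ ^ 3)) =
      ((‖v‖ ^ 2 * ‖w‖ ^ 2 - ⟪w, v⟫ ^ 2) / (‖v‖ * ‖w‖ + ⟪w, v⟫) ^ 2) ^ 2 := by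
    rw [← mul_pow, sq_sub_sq]
    field_simp
  rw [alignment_eq_div_sqrt_features hv, evenFeature_add_oddFeature hv hw,
    evenFeature_sub_oddFeature hv hw, div_sqrt_sq_add_sq (by positivity), hratio, ← pow_mul]

theorem iteratedDeriv_nine_alignment_line {v : E} (hv : v ≠ 0) (e : E) (c : ℝ) :
    iteratedDeriv 9 (fun t : ℝ => alignment v (v + (t - c) • e)) c =
      5670 / ‖v‖ ^ 18 * (‖v‖ ^ 2 * ‖e‖ ^ 2 - ⟪e, v⟫ ^ 2) ^ 4 * ⟪e, v⟫ := by
  set P : ℝ → ℝ := fun t => ‖v‖ * ‖v + (t - c) • e‖ + ⟪v + (t - c) • e, v⟫ with hP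
  set G : ℝ := ‖v‖ ^ 2 * ‖e‖ ^ 2 - ⟪e, v⟫ ^ 2
  have hPc : P c = 2 * ‖v‖ ^ 2 := by
    simp only [hP, sub_self, zero_smul, add_zero, real_inner_self_eq_norm_sq]
    ring
  have hPpos : 0 < P c := by
    rw [hPc]
    exact mul_pos two_pos (pow_pos (norm_pos_iff.2 hv) 2)
  have hPderiv : HasDerivAt P (2 * ⟪e, v⟫) c := hasDerivAt_norm_mul_norm_add_inner_line hv e c
  have hPsmooth : ContDiffAt ℝ 9 P c := contDiffAt_norm_mul_norm_add_inner_line hv e c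
  have hUsmooth : ContDiffAt ℝ 9 (fun t => (G / P t ^ 2) ^ 4) c :=
    (contDiffAt_const.div (hPsmooth.pow 2) (pow_pos hPpos 2).ne').pow 4
  have hUderiv : HasDerivAt (fun t => (G / P t ^ 2) ^ 4)
      (-(G ^ 4 * ⟪e, v⟫) / (32 * ‖v‖ ^ 18)) c := by
    refine (((hasDerivAt_const c G).fun_div (hPderiv.fun_pow 2)
      (pow_pos hPpos 2).ne').fun_pow 4).congr_deriv ?_
    rw [hPc]
    have := norm_ne_zero_iff.2 hv
    push_cast
    field_simp
    ring
  have hexpand : (fun t : ℝ => alignment v (v + (t - c) • e)) =ᶠ[nhds c]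
      fun t => (√(1 + (t - c) ^ 8 * (G / P t ^ 2) ^ 4))⁻¹ := by
    filter_upwards [hPderiv.continuousAt.eventually (lt_mem_nhds hPpos)] with t ht
    rw [alignment_eq_inv_sqrt_one_add ht, norm_sq_mul_norm_sq_sub_inner_sq_add_smul]
    congr 3
    ring
  rw [hexpand.iteratedDeriv_eq,
    iteratedDeriv_succ_comp_sub_pow_mul (n := 8) (by norm_num) analyticAt_inv_sqrt_one_add hUsmooth,
    deriv_inv_sqrt_one_add, hUderiv.deriv]
  rw [show ((8 + 1 : ℕ).factorial : ℝ) = 362880 by norm_num [Nat.factorial]]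
  ring

theorem relu_kernel_ninth_order_sensitivity_gap_general {e₁ e₂ : E} (hv : e₁ + e₂ ≠ 0) :
    |iteratedDeriv 9 (fun t : ℝ => alignment (e₁ + e₂) (t • e₁ + e₂)) 1| -
        |iteratedDeriv 9 (fun t : ℝ => alignment (e₁ + e₂) (e₁ + t • e₂)) 1| =
      5670 / ‖e₁ + e₂‖ ^ 18 * (‖e₁‖ ^ 2 * ‖e₂‖ ^ 2 - ⟪e₁, e₂⟫ ^ 2) ^ 4 *
        (|⟪e₁, e₁ + e₂⟫| - |⟪e₂, e₁ + e₂⟫|) := by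
  have hline₁ (t : ℝ) : t • e₁ + e₂ = e₁ + e₂ + (t - 1) • e₁ := by module
  have hline₂ (t : ℝ) : e₁ + t • e₂ = e₁ + e₂ + (t - 1) • e₂ := by module
  have hgram₁ : ‖e₁ + e₂‖ ^ 2 * ‖e₁‖ ^ 2 - ⟪e₁, e₁ + e₂⟫ ^ 2 =
      ‖e₁‖ ^ 2 * ‖e₂‖ ^ 2 - ⟪e₁, e₂⟫ ^ 2 := by
    simpa [mul_comm, real_inner_comm] using norm_sq_mul_norm_sq_sub_inner_sq_add_smul e₁ e₂ 1
  have hgram₂ : ‖e₁ + e₂‖ ^ 2 * ‖e₂‖ ^ 2 - ⟪e₂, e₁ + e₂⟫ ^ 2 =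
      ‖e₁‖ ^ 2 * ‖e₂‖ ^ 2 - ⟪e₁, e₂⟫ ^ 2 := by
    simpa [mul_comm, add_comm, real_inner_comm] using
      norm_sq_mul_norm_sq_sub_inner_sq_add_smul e₂ e₁ 1
  simp only [hline₁, hline₂, iteratedDeriv_nine_alignment_line hv, hgram₁, hgram₂, abs_mul]
  rw [abs_of_nonneg (by positivity), abs_of_nonneg (by positivity), mul_sub]

end Alignment

theorem abs_sub_abs_iteratedDeriv_nine_alignment_coordinates {A B : ℝ} (hv : !₂[A, B] ≠ 0) :
    |iteratedDeriv 9 (fun t => alignment !₂[A, B] !₂[t * A, 1 * B]) 1| -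
        |iteratedDeriv 9 (fun t => alignment !₂[A, B] !₂[1 * A, t * B]) 1| =
      5670 / (A ^ 2 + B ^ 2) ^ 9 * (A * B) ^ 8 * (A ^ 2 - B ^ 2) := by
  have hsplit (s t : ℝ) : !₂[s * A, t * B] = s • !₂[A, 0] + t • !₂[0, B] := by
    ext i; fin_cases i <;> simp
  have hsum : !₂[A, B] = !₂[A, 0] + !₂[0, B] := by simpa using hsplit 1 1
  have hnorm : ‖!₂[A, 0] + !₂[0, B]‖ ^ 18 = (A ^ 2 + B ^ 2) ^ 9 := by
    rw [show 18 = 2 * 9 by norm_num, pow_mul, EuclideanSpace.real_norm_sq_eq, Fin.sum_univ_two]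
    simp
  have hgap := relu_kernel_ninth_order_sensitivity_gap_general (e₁ := !₂[A, 0]) (e₂ := !₂[0, B])
    (hsum ▸ hv)
  simp only [hsplit, one_smul, hsum, hgap, hnorm]
  have hinner₁ : ⟪!₂[A, 0], !₂[A, 0] + !₂[0, B]⟫ = A ^ 2 := by simp [PiLp.inner_apply, sq]
  have hinner₂ : ⟪!₂[0, B], !₂[A, 0] + !₂[0, B]⟫ = B ^ 2 := by simp [PiLp.inner_apply, sq]
  have hgram : ‖!₂[A, 0]‖ ^ 2 * ‖!₂[0, B]‖ ^ 2 - ⟪!₂[A, 0], !₂[0, B]⟫ ^ 2 = (A * B) ^ 2 := by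
    simp [EuclideanSpace.real_norm_sq_eq, PiLp.inner_apply, mul_pow]
  rw [hinner₁, hinner₂, hgram, abs_sq, abs_sq, ← pow_mul]

/-- **Order-9 sensitivity gap of the approximate ReLU kernel.** For the
normalized alignment `γ` between the approximate-ReLU-kernel prediction
function `f` and its availability-rescaled version `g_b`, the order-9
sensitivities `ζᵢ = (∂⁹/∂bᵢ⁹) γ |_{b=(1,1)}` satisfy
`|ζ₁| − |ζ₂| = (5670/(a₁²μ₁² + a₂²μ₂²)⁹)(a₁a₂μ₁μ₂)⁸(a₁²μ₁² − a₂²μ₂²)`. -/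
theorem relu_kernel_ninth_order_sensitivity_gap
    (a₁ a₂ μ₁ μ₂ : ℝ) (ha₁ : 0 < a₁) (ha₂ : 0 < a₂)
    (hm₁ : a₁ * μ₁ ≠ 0) (hm₂ : a₂ * μ₂ ≠ 0)
    (v : EuclideanSpace ℝ (Fin 2))
    (hv : v = (WithLp.equiv 2 (Fin 2 → ℝ)).symm ![a₁ * μ₁, a₂ * μ₂])
    (p : Measure (EuclideanSpace ℝ (Fin 2)))
    (hp : p = (1/2 : ℝ≥0∞) • Measure.dirac v + (1/2 : ℝ≥0∞) • Measure.dirac (-v))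
    (φ₁ φ₂ : EuclideanSpace ℝ (Fin 2) → ℝ)
    (hφ₁ : ∀ x, φ₁ x = (‖x‖ / (2 * ‖v‖)) * (1 + ⟪‖x‖⁻¹ • x, ‖v‖⁻¹ • v⟫ ^ 2))
    (hφ₂ : ∀ x, φ₂ x = ⟪x, v⟫ / ‖v‖ ^ 2)
    (f : EuclideanSpace ℝ (Fin 2) → ℝ)
    (hf : ∀ x, f x = (1/2) * (φ₁ x * φ₁ v + φ₂ x * φ₂ v))
    (g : ℝ → ℝ → EuclideanSpace ℝ (Fin 2) → ℝ)
    (hg : ∀ b₁ b₂ x, g b₁ b₂ x = (1/2) *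
      (φ₁ x * φ₁ ((WithLp.equiv 2 (Fin 2 → ℝ)).symm ![b₁ * (a₁ * μ₁), b₂ * (a₂ * μ₂)]) +
       φ₂ x * φ₂ ((WithLp.equiv 2 (Fin 2 → ℝ)).symm ![b₁ * (a₁ * μ₁), b₂ * (a₂ * μ₂)])))
    (γ : ℝ → ℝ → ℝ)
    (hγ : ∀ b₁ b₂, γ b₁ b₂ = (∫ x, f x * g b₁ b₂ x ∂p) /
      (Real.sqrt (∫ x, (f x) ^ 2 ∂p) * Real.sqrt (∫ x, (g b₁ b₂ x) ^ 2 ∂p))) :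
    |iteratedDeriv 9 (fun t => γ t 1) 1| - |iteratedDeriv 9 (fun t => γ 1 t) 1| =
      (5670 / (a₁ ^ 2 * μ₁ ^ 2 + a₂ ^ 2 * μ₂ ^ 2) ^ 9) *
        (a₁ * a₂ * μ₁ * μ₂) ^ 8 * (a₁ ^ 2 * μ₁ ^ 2 - a₂ ^ 2 * μ₂ ^ 2) := by
  have hγ' (b₁ b₂ : ℝ) : γ b₁ b₂ =
      alignment !₂[a₁ * μ₁, a₂ * μ₂] !₂[b₁ * (a₁ * μ₁), b₂ * (a₂ * μ₂)] := by
    simp only [hγ, hf, hg, hφ₁, hφ₂, hp, hv]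
    rfl
  have hv₀ : !₂[a₁ * μ₁, a₂ * μ₂] ≠ 0 := fun h => hm₁ (by simpa using congrArg (· 0) h)
  simp only [hγ', abs_sub_abs_iteratedDeriv_nine_alignment_coordinates hv₀]
  ring
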